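/- Every amenable Banach algebra is approximately semi-contractible. -/

import Mathlib

open Filter Topology

structure BanachBimodule (A : Type) [NonUnitalNormedRing A] [NormedSpace ℂ A]
    (X : Type) [NormedAddCommGroup X] [NormedSpace ℂ X] where
  lsmul : A →L[ℂ] X →L[ℂ] X
  rsmul : A →L[ℂ] X →L[ℂ] X
  lsmul_mul : ∀ a b x, lsmul (a * b) x = lsmul a (lsmul b x)
  rsmul_mul : ∀ a b x, rsmul (a * b) x = rsmul b (rsmul a x)
  lsmul_rsmul : ∀ a b x, rsmul b (lsmul a x) = lsmul a (rsmul b x)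

namespace BanachBimodule

variable {A : Type} [NonUnitalNormedRing A] [NormedSpace ℂ A]
variable {X : Type} [NormedAddCommGroup X] [NormedSpace ℂ X]

/-- The dual Banach bimodule on `X →L[ℂ] ℂ`, with `(a • f) x = f (x • a)` and
`(f • a) x = f (a • x)`. -/
noncomputable def dual (M : BanachBimodule A X) :
    BanachBimodule A (X →L[ℂ] ℂ) where
  lsmul := ((ContinuousLinearMap.compL ℂ X X ℂ).flip).comp M.rsmul
  rsmul := ((ContinuousLinearMap.compL ℂ X X ℂ).flip).comp M.lsmul
  lsmul_mul := by
    intro a b f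
    ext x
    exact congrArg f (M.rsmul_mul a b x)
  rsmul_mul := by
    intro a b f
    ext x
    exact congrArg f (M.lsmul_mul a b x)
  lsmul_rsmul := by
    intro a b f
    ext x
    exact congrArg f (M.lsmul_rsmul b a x)

def IsDerivation (M : BanachBimodule A X) (D : A →L[ℂ] X) : Prop :=
  ∀ a b : A, D (a * b) = M.lsmul a (D b) + M.rsmul b (D a)

def IsInner (M : BanachBimodule A X) (D : A →L[ℂ] X) : Prop :=
  ∃ x : X, ∀ a : A, D a = M.lsmul a x - M.rsmul a x

def IsSemiInner (M : BanachBimodule A X) (D : A →L[ℂ] X) : Prop :=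
  ∃ η ξ : X, ∀ a : A, D a = M.lsmul a η - M.rsmul a ξ

def IsApproxSemiInner (M : BanachBimodule A X) (D : A →L[ℂ] X) : Prop :=
  ∃ (ι : Type) (l : Filter ι) (η ξ : ι → X), l.NeBot ∧
    ∀ a : A, Tendsto (fun i => M.lsmul a (η i) - M.rsmul a (ξ i)) l (𝓝 (D a))

end BanachBimodule

/-- A Banach algebra `A` is amenable if every continuous derivation from `A` into the dual of
any Banach `A`-bimodule is inner. -/
def Amenable (A : Type) [NonUnitalNormedRing A] [NormedSpace ℂ A] : Prop :=
  ∀ (X : Type) [NormedAddCommGroup X] [NormedSpace ℂ X] [CompleteSpace X],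
    ∀ (M : BanachBimodule A X) (D : A →L[ℂ] (X →L[ℂ] ℂ)),
      M.dual.IsDerivation D → M.dual.IsInner D

/-- A Banach algebra `A` is semi-amenable if every continuous derivation from `A` into the dual of
any Banach `A`-bimodule is semi-inner. -/
def SemiAmenable (A : Type) [NonUnitalNormedRing A] [NormedSpace ℂ A] : Prop :=
  ∀ (X : Type) [NormedAddCommGroup X] [NormedSpace ℂ X] [CompleteSpace X],
    ∀ (M : BanachBimodule A X) (D : A →L[ℂ] (X →L[ℂ] ℂ)),
      M.dual.IsDerivation D → M.dual.IsSemiInner D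

/-- A Banach algebra `A` is approximately semi-amenable if every continuous derivation from `A`
into the dual of any Banach `A`-bimodule is approximately semi-inner. -/
def ApproxSemiAmenable (A : Type) [NonUnitalNormedRing A] [NormedSpace ℂ A] : Prop :=
  ∀ (X : Type) [NormedAddCommGroup X] [NormedSpace ℂ X] [CompleteSpace X],
    ∀ (M : BanachBimodule A X) (D : A →L[ℂ] (X →L[ℂ] ℂ)),
      M.dual.IsDerivation D → M.dual.IsApproxSemiInner D

/-- A Banach algebra `A` is semi-contractible if every continuous derivation from `A` into
any Banach `A`-bimodule is semi-inner. -/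
def SemiContractible (A : Type) [NonUnitalNormedRing A] [NormedSpace ℂ A] : Prop :=
  ∀ (X : Type) [NormedAddCommGroup X] [NormedSpace ℂ X] [CompleteSpace X],
    ∀ (M : BanachBimodule A X) (D : A →L[ℂ] X),
      M.IsDerivation D → M.IsSemiInner D

/-- A Banach algebra `A` is approximately semi-contractible if every continuous derivation from `A`
into any Banach `A`-bimodule is approximately semi-inner. -/
def ApproxSemiContractible (A : Type) [NonUnitalNormedRing A] [NormedSpace ℂ A] : Prop :=
  ∀ (X : Type) [NormedAddCommGroup X] [NormedSpace ℂ X] [CompleteSpace X],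
    ∀ (M : BanachBimodule A X) (D : A →L[ℂ] X),
      M.IsDerivation D → M.IsApproxSemiInner D

/-!
Composing a derivation `D : A → X` with the canonical embedding `X → X**` gives a derivation into a
dual bimodule, so it is a pointwise limit of maps `a ↦ a · Φ - Ψ · a`; amenability even gives
equality with `Φ = Ψ`. Although `Φ` and `Ψ` lie only in `X**`, they can be replaced by elements
of `X`: a continuous functional on the product space `X ^ A` depends on finitely many coordinates,
so if it kills all the maps `a ↦ a · η - ξ · a` with `η, ξ ∈ X`, then evaluating `Φ` and `Ψ` on its
coordinates shows that it kills `D`. By Hahn–Banach, `D` is in the closure of these maps for the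
topology of pointwise norm convergence.
-/

section TopologicalVectorSpace

theorem exists_finset_forall_eq_sum_single {𝕜 ι : Type*} [NormedField 𝕜] [DecidableEq ι]
    {G : ι → Type*} [∀ i, AddCommGroup (G i)] [∀ i, Module 𝕜 (G i)] [∀ i, TopologicalSpace (G i)]
    (f : StrongDual 𝕜 (∀ i, G i)) :
    ∃ s : Finset ι, ∀ v, f v = ∑ i ∈ s, f (Pi.single i (v i)) := by
  have unit_ball_mem : f ⁻¹' Metric.ball 0 1 ∈ 𝓝 0 :=
    f.continuous.tendsto' 0 0 (map_zero f) (Metric.ball_mem_nhds 0 one_pos)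
  rw [nhds_pi, mem_pi'] at unit_ball_mem
  obtain ⟨s, t, ht, hst⟩ := unit_ball_mem
  have eq_zero_of_forall_mem (v : ∀ i, G i) (hv : ∀ i ∈ s, v i = 0) : f v = 0 := by
    by_contra hfv
    have : (f v)⁻¹ • v ∈ f ⁻¹' Metric.ball 0 1 :=
      hst fun i hi => by simpa [hv i hi] using mem_of_mem_nhds (ht i)
    simp [hfv] at this
  refine ⟨s, fun v => ?_⟩
  rw [← map_sum, ← sub_eq_zero, ← map_sub]
  refine eq_zero_of_forall_mem _ fun i hi => ?_
  simp [Finset.sum_apply, Finset.sum_pi_single, hi]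

variable {𝕜 : Type*} [RCLike 𝕜]

theorem mem_closure_of_forall_strongDual {E : Type*} [AddCommGroup E] [TopologicalSpace E]
    [IsTopologicalAddGroup E] [Module ℝ E] [LocallyConvexSpace ℝ E] [Module 𝕜 E]
    [IsScalarTower ℝ 𝕜 E] [ContinuousSMul 𝕜 E] {p : Submodule 𝕜 E} {v : E}
    (h : ∀ f : StrongDual 𝕜 E, (∀ x ∈ p, f x = 0) → f v = 0) : v ∈ closure (p : Set E) := by
  have : ContinuousSMul ℝ E := IsScalarTower.continuousSMul 𝕜
  by_contra hv
  obtain ⟨f, u, hfp, hfv⟩ := RCLike.geometric_hahn_banach_closed_point (𝕜 := 𝕜)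
    (p.restrictScalars ℝ).convex.closure isClosed_closure hv
  have hu : 0 < u := by simpa using hfp 0 (subset_closure p.zero_mem)
  have vanishes (x : E) (hx : x ∈ p) : f x = 0 := by
    by_contra hfx
    have := hfp (((u : 𝕜) / f x) • x) (subset_closure (p.smul_mem _ hx))
    simp [hfx] at this
  rw [h f vanishes, map_zero] at hfv
  exact hfv.not_gt hu

theorem mem_closure_range_pi_of_tendsto_bidual {ι κ E : Type*} {G : ι → Type*}
    [AddCommGroup E] [Module 𝕜 E] [TopologicalSpace E]
    [∀ i, AddCommGroup (G i)] [∀ i, TopologicalSpace (G i)] [∀ i, IsTopologicalAddGroup (G i)]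
    [∀ i, Module ℝ (G i)] [∀ i, LocallyConvexSpace ℝ (G i)] [∀ i, Module 𝕜 (G i)]
    [∀ i, IsScalarTower ℝ 𝕜 (G i)] [∀ i, ContinuousSMul 𝕜 (G i)]
    (T : ∀ i, E →L[𝕜] G i) {y : ∀ i, G i} {l : Filter κ} [l.NeBot]
    (Φ : κ → Module.Dual 𝕜 (StrongDual 𝕜 E))
    (h : ∀ i (f : StrongDual 𝕜 (G i)), Tendsto (fun k => Φ k (f ∘L T i)) l (𝓝 (f (y i)))) :
    y ∈ closure (Set.range (ContinuousLinearMap.pi T)) := by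
  classical
  refine mem_closure_of_forall_strongDual (𝕜 := 𝕜)
    (p := (ContinuousLinearMap.pi T).range) fun f hf => ?_
  obtain ⟨s, hs⟩ := exists_finset_forall_eq_sum_single f
  let g (i : ι) : StrongDual 𝕜 (G i) := f ∘L ContinuousLinearMap.single 𝕜 G i
  have sum_comp_eq_zero : ∑ i ∈ s, g i ∘L T i = 0 := by
    ext x
    simpa [g, ← hs] using hf (fun i => T i x) ⟨x, rfl⟩
  have tendsto_sum : Tendsto (fun k => Φ k (∑ i ∈ s, g i ∘L T i)) l (𝓝 (f y)) := by
    simp only [map_sum, hs y]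
    exact tendsto_finsetSum s fun i _ => h i (g i)
  simp only [sum_comp_eq_zero, map_zero] at tendsto_sum
  exact tendsto_nhds_unique tendsto_sum tendsto_const_nhds

end TopologicalVectorSpace

namespace BanachBimodule

variable {A : Type} [NonUnitalNormedRing A] [NormedSpace ℂ A]
variable {X : Type} [NormedAddCommGroup X] [NormedSpace ℂ X]
variable {M : BanachBimodule A X} {D : A →L[ℂ] X}

/-- The map `(η, ξ) ↦ a · η - ξ · a`. Taking `a` as the index of a product, the image of
`X × X` in `A → X` is the space of semi-inner maps, and its closure in the product topology consists
of the pointwise limits of such maps. -/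
noncomputable def semiInnerEval (M : BanachBimodule A X) (a : A) : X × X →L[ℂ] X :=
  M.lsmul a ∘L ContinuousLinearMap.fst ℂ X X - M.rsmul a ∘L ContinuousLinearMap.snd ℂ X X

theorem isApproxSemiInner_of_mem_closure_range
    (h : ⇑D ∈ closure (Set.range (ContinuousLinearMap.pi M.semiInnerEval))) :
    M.IsApproxSemiInner D :=
  ⟨X × X, comap (ContinuousLinearMap.pi M.semiInnerEval) (𝓝 ⇑D), Prod.fst, Prod.snd,
    comap_neBot_iff_frequently.2 (mem_closure_iff_frequently.1 h),
    tendsto_pi_nhds.1 tendsto_comap⟩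

theorem IsInner.isApproxSemiInner (h : M.IsInner D) : M.IsApproxSemiInner D := by
  obtain ⟨x, hx⟩ := h
  exact ⟨Unit, ⊤, fun _ => x, fun _ => x, inferInstance, fun a => hx a ▸ tendsto_const_nhds⟩

theorem IsDerivation.inclusionInDoubleDual_comp (h : M.IsDerivation D) :
    M.dual.dual.IsDerivation (NormedSpace.inclusionInDoubleDual ℂ X ∘L D) := by
  intro a b
  ext f
  exact (congrArg f (h a b)).trans (map_add f _ _)

theorem IsApproxSemiInner.of_inclusionInDoubleDual_comp
    (h : M.dual.dual.IsApproxSemiInner (NormedSpace.inclusionInDoubleDual ℂ X ∘L D)) :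
    M.IsApproxSemiInner D := by
  obtain ⟨κ, l, η, ξ, hl, hlim⟩ := h
  let Φ (k : κ) : StrongDual ℂ (StrongDual ℂ (X × X)) :=
    η k ∘L (ContinuousLinearMap.inl ℂ X X).precomp ℂ +
      ξ k ∘L (ContinuousLinearMap.inr ℂ X X).precomp ℂ
  refine isApproxSemiInner_of_mem_closure_range <|
    mem_closure_range_pi_of_tendsto_bidual (l := l) M.semiInnerEval
      (fun k => (Φ k).toLinearMap) fun a f => ?_
  have eval_eq (k : κ) : Φ k (f ∘L M.semiInnerEval a) =
      (M.dual.dual.lsmul a (η k) - M.dual.dual.rsmul a (ξ k)) f := by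
    have comp_inl : (f ∘L M.semiInnerEval a) ∘L ContinuousLinearMap.inl ℂ X X =
        M.dual.rsmul a f := by
      ext x
      simp [semiInnerEval, dual]
    have comp_inr : (f ∘L M.semiInnerEval a) ∘L ContinuousLinearMap.inr ℂ X X =
        -M.dual.lsmul a f := by
      ext x
      simp [semiInnerEval, dual]
    calc Φ k (f ∘L M.semiInnerEval a)
        = η k (M.dual.rsmul a f) + ξ k (-M.dual.lsmul a f) := by
          rw [← comp_inl, ← comp_inr]; rfl
      _ = η k (M.dual.rsmul a f) - ξ k (M.dual.lsmul a f) := by rw [map_neg, sub_eq_add_neg]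
  simp only [ContinuousLinearMap.coe_coe, eval_eq]
  exact ((ContinuousLinearMap.apply ℂ ℂ f).continuous.tendsto _).comp (hlim a)

end BanachBimodule

theorem Amenable.approxSemiAmenable {A : Type} [NonUnitalNormedRing A] [NormedSpace ℂ A]
    (hA : Amenable A) : ApproxSemiAmenable A :=
  fun X _ _ _ M D hD => (hA X M D hD).isApproxSemiInner

theorem approxSemiContractible_of_amenable_general (A : Type) [NonUnitalNormedRing A]
    [NormedSpace ℂ A] (hA : ApproxSemiAmenable A) : ApproxSemiContractible A :=
  fun X _ _ _ M _ hD => .of_inclusionInDoubleDual_comp <|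
    hA (StrongDual ℂ X) M.dual _ hD.inclusionInDoubleDual_comp

/-- Every amenable Banach algebra is approximately semi-contractible. -/
theorem approxSemiContractible_of_amenable
    (A : Type) [NonUnitalNormedRing A] [NormedSpace ℂ A]
    [IsScalarTower ℂ A A] [SMulCommClass ℂ A A] [CompleteSpace A]
    (hA : Amenable A) : ApproxSemiContractible A :=
  approxSemiContractible_of_amenable_general A hA.approxSemiAmenable
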